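/- Let S¹_ℚ(odd) be the set of rational points (p,q) on the unit circle with p ≠ 0 and q ≠ 0 such that, writing |p| = x/z in lowest terms, the numerator x is odd. For each such point let θ(p,q) ∈ [0, 2π) be its angle, so (p,q) = (cos θ(p,q), sin θ(p,q)). Then for any 0 ≤ θ₁ < θ₂ ≤ 2π, lim_{H→∞} (1/H)·|{(p,q) ∈ S¹_ℚ(odd) : θ₁ ≤ θ(p,q) < θ₂, h(p,q) ≤ H}| = (θ₂−θ₁)/π². -/

import Mathlib

open Filter

/-- The height of a rational point `(p,q)`: the minimal positive integer `h` such that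
`(hp, hq) ∈ ℤ²`. -/
noncomputable def height (p q : ℚ) : ℕ :=
  sInf {h : ℕ | 0 < h ∧ (∃ a : ℤ, (h : ℚ) * p = a) ∧ (∃ b : ℤ, (h : ℚ) * q = b)}

/-!
Squaring Gaussian integers parametrizes the circle: every rational point whose first coordinate has
odd numerator is `z ^ 2 / N(z)` for a primitive Gaussian integer `z` of odd norm, unique up to
sign. This fraction is in lowest terms, so the height of the point is `N(z)`, and its angle is
`2 * arg z`. One therefore counts primitive lattice points of odd norm in a cone.

The Gaussian integers of odd norm are those outside the index-two ideal `(1 + i)`, so they have half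
the density of all lattice points. Since their coordinates have an odd greatest common divisor `d`,
Möbius inversion over odd `d` selects the primitive ones, and the density gets multiplied by
`∑ μ(d) / d ^ 2 = 1 / ((1 - 2⁻²) ζ(2)) = 8 / π ^ 2`.
-/

section

open MeasureTheory Set Topology

open scoped Real ArithmeticFunction.Moebius

local notation "ℤ[i]" => GaussianInt

lemma exists_abs_le_mul_abs_of_tendsto_div {N : ℝ → ℝ} {L : ℝ} (hmono : Monotone N)
    (hzero : ∀ x < 1, N x = 0) (hlim : Tendsto (fun c ↦ N c / c) atTop (𝓝 L)) :
    ∃ C, ∀ x, |N x| ≤ C * |x| := by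
  have hnonneg (x : ℝ) : 0 ≤ N x := by
    rw [← hzero (min x 0) (min_lt_of_right_lt one_pos)]
    exact hmono (min_le_left x 0)
  obtain ⟨x₀, hx₀⟩ := eventually_atTop.1 (hlim.eventually_lt_const (lt_add_one L))
  refine ⟨max (L + 1) (N x₀), fun x ↦ ?_⟩
  rcases lt_or_ge x 1 with hx | hx
  · rw [hzero x hx, abs_zero]
    exact mul_nonneg (le_max_of_le_right (hnonneg x₀)) (abs_nonneg x)
  have hx' : 0 < x := one_pos.trans_le hx
  rw [abs_of_nonneg (hnonneg x), abs_of_pos hx']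
  rcases le_total x₀ x with h | h
  · grw [← le_max_left]
    exact ((div_lt_iff₀ hx').1 (hx₀ x h)).le
  · grw [← le_max_right, hmono h, ← hx, mul_one]
    exact hnonneg x₀

lemma tendsto_tsum_mul_comp_div_div {ι : Type*} {N : ℝ → ℝ} {C L : ℝ} {g b : ι → ℝ}
    (hN : ∀ x, |N x| ≤ C * |x|) (hlim : Tendsto (fun c ↦ N c / c) atTop (𝓝 L))
    (hb : ∀ i, 0 < b i) (hg : Summable fun i ↦ |g i| / b i) :
    Tendsto (fun c : ℝ ↦ (∑' i, g i * N (c / b i)) / c) atTop (𝓝 ((∑' i, g i / b i) * L)) := by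
  simp only [← tsum_div_const, ← tsum_mul_right]
  refine tendsto_tsum_of_dominated_convergence (hg.mul_left C) (fun i ↦ ?_) ?_
  · refine ((hlim.comp (tendsto_id.atTop_div_const (hb i))).const_mul (g i / b i)).congr fun c ↦ ?_
    have := (hb i).ne'
    simp only [Function.comp_apply, id_eq]
    field_simp
  · filter_upwards [eventually_gt_atTop 0] with c hc i
    calc ‖g i * N (c / b i) / c‖ = |g i| * |N (c / b i)| / c := by
          rw [Real.norm_eq_abs, abs_div, abs_mul, abs_of_pos hc]
      _ ≤ |g i| * (C * |c / b i|) / c := by gcongr; exact hN _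
      _ = C * (|g i| / b i) := by
          rw [abs_of_pos (div_pos hc (hb i))]
          field_simp

lemma sum_divisors_moebius (n : ℕ) : ∑ d ∈ n.divisors, μ d = if n = 1 then 1 else 0 := by
  rw [← ArithmeticFunction.coe_mul_zeta_apply, ArithmeticFunction.moebius_mul_coe_zeta,
    ArithmeticFunction.one_apply]

lemma hasSum_odd_moebius_of_dvd {n : ℕ} (hn : Odd n) :
    HasSum (fun d : {d : ℕ // Odd d} ↦ if (d : ℕ) ∣ n then (μ d : ℝ) else 0)
      (if n = 1 then 1 else 0) := by
  have hsupport : Function.support (fun d : ℕ ↦ if d ∣ n then (μ d : ℝ) else 0) ⊆ {d | Odd d} :=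
    fun d hd ↦ hn.of_dvd_nat (by by_contra h; simp [h] at hd)
  have hsum : ∑ d ∈ n.divisors, (if d ∣ n then (μ d : ℝ) else 0) = if n = 1 then 1 else 0 := by
    rw [Finset.sum_congr rfl fun d hd ↦ if_pos (Nat.dvd_of_mem_divisors hd)]
    exact_mod_cast sum_divisors_moebius n
  rw [← hsum]
  refine (hasSum_subtype_iff_of_support_subset hsupport).2 (hasSum_sum_of_ne_finset_zero ?_)
  exact fun d hd ↦ if_neg fun h ↦ hd (Nat.mem_divisors.2 ⟨h, hn.pos.ne'⟩)

lemma ncard_sep_eq_one_eq_tsum_moebius {α : Type*} {s : Set α} (hs : s.Finite) {f : α → ℕ}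
    (hf : ∀ a ∈ s, Odd (f a)) :
    ({a ∈ s | f a = 1}.ncard : ℝ) =
      ∑' d : {d : ℕ // Odd d}, (μ d : ℝ) * {a ∈ s | (d : ℕ) ∣ f a}.ncard := by
  lift s to Finset α using hs
  have hncard (p : α → Prop) [DecidablePred p] : {a ∈ (s : Set α) | p a}.ncard =
      {a ∈ s | p a}.card := by
    rw [← ncard_coe_finset, Finset.coe_filter]; rfl
  have hsum := hasSum_sum fun a (ha : a ∈ s) ↦ hasSum_odd_moebius_of_dvd (hf a ha)
  simp only [hncard]
  simpa [← Finset.sum_filter, mul_comm] using hsum.tsum_eq.symm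

lemma LSeries_one_mul_moebius_two :
    LSeries ((fun n : ℕ ↦ (1 : DirichletCharacter ℂ 2) n) * fun n : ℕ ↦ (μ n : ℂ)) 2 =
      ((∑' d : {d : ℕ // Odd d}, (μ d : ℝ) / (d : ℕ) ^ 2 : ℝ) : ℂ) := by
  have hterm : LSeries.term ((fun n : ℕ ↦ (1 : DirichletCharacter ℂ 2) n) *
      fun n : ℕ ↦ (μ n : ℂ)) 2 = {d | Odd d}.indicator fun d ↦ (μ d : ℂ) / d ^ 2 := by
    classical
    ext d
    rcases eq_or_ne d 0 with rfl | hd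
    · simp
    have hchar : (1 : DirichletCharacter ℂ 2) d = if Odd d then 1 else 0 := by
      have hunit : IsUnit (d : ZMod 2) ↔ Odd d := by
        rw [ZMod.isUnit_iff_coprime, Nat.coprime_two_right]
      split_ifs with h
      · exact MulChar.one_apply (hunit.2 h)
      · exact MulChar.map_nonunit _ (hunit.not.2 h)
    simp [LSeries.term_of_ne_zero hd, hchar, indicator_apply, ite_div]
  rw [LSeries, hterm, ← tsum_subtype, Complex.ofReal_tsum]
  simp only [Complex.ofReal_div, Complex.ofReal_pow, Complex.ofReal_natCast, Complex.ofReal_intCast]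
  rfl

lemma tsum_odd_moebius_div_sq : ∑' d : {d : ℕ // Odd d}, (μ d : ℝ) / (d : ℕ) ^ 2 = 8 / π ^ 2 := by
  have hs : 1 < (2 : ℂ).re := by norm_num
  have hEuler : ∏ p ∈ Nat.primeFactors 2, (1 - (p : ℂ) ^ (-2 : ℂ)) = 3 / 4 := by
    rw [Nat.prime_two.primeFactors, Finset.prod_singleton, Complex.cpow_neg, Nat.cast_ofNat,
      Complex.cpow_ofNat]
    norm_num
  have hLFunction : DirichletCharacter.LFunction (1 : DirichletCharacter ℂ 2) 2 =
      3 / 4 * (π ^ 2 / 6) := by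
    rw [← hEuler, ← riemannZeta_two]
    exact DirichletCharacter.LFunctionTrivChar_eq_mul_riemannZeta (by norm_num)
  have h := DirichletCharacter.LSeries.mul_mu_eq_one (1 : DirichletCharacter ℂ 2) hs
  rw [LSeries_one_mul_moebius_two, ← DirichletCharacter.LFunction_eq_LSeries _ hs,
    hLFunction] at h
  have h' : 3 / 4 * (π ^ 2 / 6) * ∑' d : {d : ℕ // Odd d}, (μ d : ℝ) / (d : ℕ) ^ 2 = 1 := by
    refine Complex.ofReal_injective ?_
    rwa [Complex.ofReal_mul, Complex.ofReal_mul, Complex.ofReal_div, Complex.ofReal_div,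
      Complex.ofReal_pow]
  rw [eq_div_iff (by positivity)]
  linear_combination 8 * h'

lemma summable_odd_moebius_div_sq :
    Summable fun d : {d : ℕ // Odd d} ↦ |(μ d : ℝ)| / (d : ℕ) ^ 2 := by
  refine ((Real.summable_one_div_nat_pow.2 one_lt_two).comp_injective
    Subtype.val_injective).of_nonneg_of_le (fun d ↦ by positivity) fun d ↦ ?_
  dsimp only [Function.comp_apply]
  gcongr
  exact_mod_cast ArithmeticFunction.abs_moebius_le_one

lemma arg_polarCoord_symm {p : ℝ × ℝ} (hp : p ∈ polarCoord.target) :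
    (Complex.polarCoord.symm p).arg = p.2 := by
  rw [Complex.polarCoord_symm_apply, Complex.ofReal_cos, Complex.ofReal_sin]
  exact Complex.arg_mul_cos_add_sin_mul_I hp.1 ⟨hp.2.1, hp.2.2.le⟩

lemma volume_preimage_arg_eq_zero {s : Set ℝ} (hs : volume s = 0) :
    volume (Complex.arg ⁻¹' s) = 0 := by
  obtain ⟨t, hst, ht, ht₀⟩ := exists_measurable_superset_of_null hs
  have hae : ∀ᵐ p : ℝ × ℝ, p.2 ∉ t :=
    measure_eq_zero_iff_ae_notMem.1 <| Measure.quasiMeasurePreserving_snd.preimage_null ht₀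
  refine measure_mono_null (preimage_mono hst) ?_
  rw [← lintegral_indicator_one (Complex.measurable_arg ht),
    ← Complex.lintegral_comp_polarCoord_symm]
  refine lintegral_eq_zero_of_ae_eq_zero ?_
  filter_upwards [ae_restrict_of_ae hae,
    ae_restrict_mem polarCoord.open_target.measurableSet] with p hpt hp
  rw [indicator_of_notMem (by rwa [mem_preimage, arg_polarCoord_symm hp]), smul_zero,
    Pi.zero_apply]

lemma volume_real_preimage_arg_inter_closedBall {s : Set ℝ} (hs : MeasurableSet s) :
    volume.real (Complex.arg ⁻¹' s ∩ Metric.closedBall 0 1) = volume.real (s ∩ Ioo (-π) π) / 2 := by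
  have hS : MeasurableSet (Complex.arg ⁻¹' s ∩ Metric.closedBall 0 1) :=
    (Complex.measurable_arg hs).inter Metric.isClosed_closedBall.measurableSet
  have hindicator : EqOn
      (fun p ↦ p.1 • (Complex.arg ⁻¹' s ∩ Metric.closedBall 0 1).indicator (1 : ℂ → ℝ)
        (Complex.polarCoord.symm p))
      ((Ioc (0 : ℝ) 1 ×ˢ s).indicator fun p ↦ p.1 * 1) polarCoord.target := by
    intro p hp
    have hp₀ : 0 < p.1 := hp.1
    classical
    simp [indicator_apply, arg_polarCoord_symm hp, Complex.norm_polarCoord_symm, abs_of_pos hp₀,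
      hp₀, and_comm, -Complex.polarCoord_symm_apply]
  calc volume.real (Complex.arg ⁻¹' s ∩ Metric.closedBall 0 1)
    _ = ∫ p in polarCoord.target,
          p.1 • (Complex.arg ⁻¹' s ∩ Metric.closedBall 0 1).indicator (1 : ℂ → ℝ)
            (Complex.polarCoord.symm p) := by
        rw [Complex.integral_comp_polarCoord_symm, integral_indicator_one hS]
    _ = ∫ p in polarCoord.target ∩ Ioc (0 : ℝ) 1 ×ˢ s, p.1 * 1 := by
        rw [setIntegral_congr_fun polarCoord.open_target.measurableSet hindicator,
          setIntegral_indicator (measurableSet_Ioc.prod hs)]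
    _ = ∫ p in Ioc (0 : ℝ) 1 ×ˢ (s ∩ Ioo (-π) π), p.1 * 1 := by
        rw [polarCoord_target, prod_inter_prod, inter_comm (Ioi 0), Ioc_inter_Ioi, max_self,
          inter_comm s]
    _ = volume.real (s ∩ Ioo (-π) π) / 2 := by
        rw [Measure.volume_eq_prod, setIntegral_prod_mul (fun r : ℝ ↦ r) (fun _ ↦ (1 : ℝ)),
          ← intervalIntegral.integral_of_le zero_le_one, integral_id, setIntegral_const]
        simp only [smul_eq_mul]
        ring

lemma frontier_preimage_arg_subset (s : Set ℝ) :
    frontier (Complex.arg ⁻¹' s) ⊆ Complex.arg ⁻¹' insert π (frontier s) ∪ {0} := by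
  intro z hz
  by_cases h : z ∈ Complex.slitPlane
  · have hcont := Complex.continuousAt_arg h
    rw [frontier_eq_closure_inter_closure] at hz
    refine Or.inl (Or.inr ?_)
    rw [frontier_eq_closure_inter_closure]
    exact ⟨hcont.continuousWithinAt.mem_closure hz.1 (mapsTo_preimage _ _),
      hcont.continuousWithinAt.mem_closure hz.2 fun _ hw ↦ hw⟩
  · rw [Complex.mem_slitPlane_iff_arg, not_and_or, not_not, not_not] at h
    exact h.imp Or.inl id

lemma volume_frontier_preimage_arg_eq_zero {s : Set ℝ} (hs : volume (frontier s) = 0) :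
    volume (frontier (Complex.arg ⁻¹' s)) = 0 :=
  measure_mono_null (frontier_preimage_arg_subset s) <| measure_union_null
    (volume_preimage_arg_eq_zero <| measure_union_null (measure_singleton π) hs)
    (measure_singleton 0)

lemma covolume_span_range_basis {ι E : Type*} [Fintype ι] [DecidableEq ι] [NormedAddCommGroup E]
    [InnerProductSpace ℝ E] [FiniteDimensional ℝ E] [MeasurableSpace E] [BorelSpace E]
    (b₀ : OrthonormalBasis ι ℝ E) (b : Module.Basis ι ℝ E) :
    ZLattice.covolume (Submodule.span ℤ (range b)) = |b₀.toBasis.det b| := by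
  rw [ZLattice.covolume_eq_det_mul_measureReal _ volume (b.restrictScalars ℤ) b₀.toBasis,
    measureReal_congr (ZSpan.fundamentalDomain_ae_parallelepiped b₀.toBasis volume),
    OrthonormalBasis.coe_toBasis, measureReal_def, b₀.volume_parallelepiped, ENNReal.toReal_one,
    mul_one]
  congr 2
  ext i
  simp

lemma setOf_mem_and_norm_pow_finrank_le_one {E : Type*} [NormedAddCommGroup E] [NormedSpace ℝ E]
    [FiniteDimensional ℝ E] [Nontrivial E] (X : Set E) :
    {x | x ∈ X ∧ ‖x‖ ^ Module.finrank ℝ E ≤ 1} = X ∩ Metric.closedBall 0 1 := by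
  ext x
  rw [mem_inter_iff, mem_closedBall_zero_iff,
    ← pow_le_one_iff_of_nonneg (norm_nonneg x) (Module.finrank_pos (R := ℝ) (M := E)).ne']
  rfl

lemma tendsto_card_cone_inter_lattice_div {E : Type*} [NormedAddCommGroup E]
    [InnerProductSpace ℝ E] [FiniteDimensional ℝ E] [MeasurableSpace E] [BorelSpace E]
    [Nontrivial E] (L : Submodule ℤ E) [DiscreteTopology L] [IsZLattice ℝ L] {X : Set E}
    (hcone : ∀ ⦃x : E⦄ ⦃r : ℝ⦄, x ∈ X → 0 < r → r • x ∈ X) (hX : MeasurableSet X)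
    (hfrontier : volume (frontier X) = 0) :
    Tendsto (fun c : ℝ ↦
      (Nat.card ({x | x ∈ X ∧ ‖x‖ ^ Module.finrank ℝ E ≤ c} ∩ L : Set E) : ℝ) / c) atTop
      (𝓝 (volume.real (X ∩ Metric.closedBall 0 1) / ZLattice.covolume L)) := by
  rw [← setOf_mem_and_norm_pow_finrank_le_one X]
  refine ZLattice.covolume.tendsto_card_le_div' L hcone
    (fun x r hr ↦ by rw [norm_smul, mul_pow, Real.norm_of_nonneg hr]) ?_ ?_ ?_ <;>
  rw [setOf_mem_and_norm_pow_finrank_le_one]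
  · exact Metric.isBounded_closedBall.subset inter_subset_right
  · exact hX.inter Metric.isClosed_closedBall.measurableSet
  · refine measure_mono_null (frontier_inter_subset _ _) (measure_union_null
      (measure_mono_null inter_subset_left hfrontier) (measure_mono_null inter_subset_right ?_))
    rw [frontier_closedBall _ one_ne_zero]
    exact Measure.addHaar_sphere volume 0 1

/-- The real basis `w, w * I` of `ℂ`, spanning the lattice of Gaussian multiples of `w`. -/
noncomputable def mulBasis {w : ℂ} (hw : w ≠ 0) : Module.Basis (Fin 2) ℝ ℂ :=
  Complex.basisOneI.map (LinearEquiv.smulOfNeZero ℂ ℂ w hw |>.restrictScalars ℝ)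

lemma covolume_mulBasis {w : ℂ} (hw : w ≠ 0) :
    ZLattice.covolume (Submodule.span ℤ (range (mulBasis hw))) = Complex.normSq w := by
  rw [covolume_span_range_basis Complex.orthonormalBasisOneI, Module.Basis.det_apply,
    Matrix.det_fin_two]
  simpa [Module.Basis.toMatrix_apply, mulBasis, Complex.normSq_apply] using
    add_nonneg (mul_self_nonneg w.re) (mul_self_nonneg w.im)

lemma mem_span_mulBasis {w : ℂ} (hw : w ≠ 0) {v : ℂ} :
    v ∈ Submodule.span ℤ (range (mulBasis hw)) ↔ ∃ z : ℤ[i], w * z = v := by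
  rw [Submodule.mem_span_range_iff_exists_fun]
  constructor
  · rintro ⟨c, rfl⟩
    refine ⟨⟨c 0, c 1⟩, ?_⟩
    simp [mulBasis, GaussianInt.toComplex_def]
    ring
  · rintro ⟨z, rfl⟩
    refine ⟨![z.re, z.im], ?_⟩
    simp [mulBasis, GaussianInt.toComplex_def]
    ring

lemma tendsto_ncard_gaussianInt_dvd_div {X : Set ℂ} {w : ℤ[i]} (hw : w ≠ 0)
    (hcone : ∀ ⦃x : ℂ⦄ ⦃r : ℝ⦄, x ∈ X → 0 < r → r • x ∈ X) (hX : MeasurableSet X)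
    (hfrontier : volume (frontier X) = 0) :
    Tendsto (fun c : ℝ ↦ ({z : ℤ[i] | w ∣ z ∧ (z : ℂ) ∈ X ∧ (z.norm : ℝ) ≤ c}.ncard : ℝ) / c) atTop
      (𝓝 (volume.real (X ∩ Metric.closedBall 0 1) / w.norm)) := by
  have hw' : (w : ℂ) ≠ 0 := by simpa
  have hcard (c : ℝ) : Nat.card ({x | x ∈ X ∧ ‖x‖ ^ Module.finrank ℝ ℂ ≤ c} ∩
      (Submodule.span ℤ (range (mulBasis hw')) : Set ℂ) : Set ℂ) =
      {z : ℤ[i] | w ∣ z ∧ (z : ℂ) ∈ X ∧ (z.norm : ℝ) ≤ c}.ncard := by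
    rw [← ncard_image_of_injective _ GaussianInt.toComplex_injective, ← Nat.card_coe_set_eq]
    congr 2
    ext v
    simp only [mem_inter_iff, SetLike.mem_coe, mem_span_mulBasis, Complex.finrank_real_complex,
      ← Complex.normSq_eq_norm_sq, mem_image, GaussianInt.intCast_real_norm]
    constructor
    · rintro ⟨⟨hv, hvc⟩, z, rfl⟩
      exact ⟨w * z, ⟨dvd_mul_right w z, by rw [map_mul]; exact ⟨hv, hvc⟩⟩, by simp⟩
    · rintro ⟨_, ⟨⟨z, rfl⟩, hz, hzc⟩, rfl⟩
      exact ⟨⟨hz, hzc⟩, z, by simp⟩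
  have := tendsto_card_cone_inter_lattice_div
    (Submodule.span ℤ (range (mulBasis hw'))) hcone hX hfrontier
  simpa only [hcard, covolume_mulBasis, ← GaussianInt.intCast_real_norm] using this

lemma norm_eq_sq_add_sq (z : ℤ[i]) : z.norm = z.re ^ 2 + z.im ^ 2 := by
  rw [Zsqrtd.norm_def]
  ring

lemma even_norm_iff {z : ℤ[i]} : Even z.norm ↔ ⟨1, 1⟩ ∣ z := by
  rw [Zsqrtd.norm_def]
  constructor
  · intro h
    obtain ⟨k, hk⟩ : Even (z.re + z.im) := by simpa [parity_simps] using h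
    exact ⟨⟨k, k - z.re⟩, by ext <;> simp; lia⟩
  · rintro ⟨u, rfl⟩
    simp [parity_simps]
    tauto

/-- The Gaussian integers of odd norm at most `c` that lie in `X`. -/
def oddNormIn (X : Set ℂ) (c : ℝ) : Set ℤ[i] :=
  {z | (z : ℂ) ∈ X ∧ Odd z.norm ∧ (z.norm : ℝ) ≤ c}

lemma finite_setOf_norm_le (c : ℝ) : {z : ℤ[i] | (z.norm : ℝ) ≤ c}.Finite := by
  have hinj : Function.Injective fun z : ℤ[i] ↦ (z.re, z.im) :=
    fun z w h ↦ Zsqrtd.ext (congrArg Prod.fst h) (congrArg Prod.snd h)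
  refine ((finite_Icc (-⌊c⌋, -⌊c⌋) (⌊c⌋, ⌊c⌋)).preimage hinj.injOn).subset fun z hz ↦ ?_
  have hnorm : z.re ^ 2 + z.im ^ 2 ≤ ⌊c⌋ := by
    linarith [Int.le_floor.2 (mem_ofPred.1 hz), Zsqrtd.norm_def z]
  have hre : |z.re| ≤ ⌊c⌋ := by
    rw [Int.abs_eq_natAbs]
    linarith [Int.natAbs_le_self_sq z.re, sq_nonneg z.im]
  have him : |z.im| ≤ ⌊c⌋ := by
    rw [Int.abs_eq_natAbs]
    linarith [Int.natAbs_le_self_sq z.im, sq_nonneg z.re]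
  exact ⟨⟨(abs_le.1 hre).1, (abs_le.1 him).1⟩, (abs_le.1 hre).2, (abs_le.1 him).2⟩

lemma finite_oddNormIn (X : Set ℂ) (c : ℝ) : (oddNormIn X c).Finite :=
  (finite_setOf_norm_le c).subset fun _ hz ↦ hz.2.2

lemma monotone_ncard_oddNormIn (X : Set ℂ) : Monotone fun c : ℝ ↦ ((oddNormIn X c).ncard : ℝ) :=
  fun _ c h ↦ Nat.cast_le.2 <|
    ncard_le_ncard (fun _ hz ↦ ⟨hz.1, hz.2.1, hz.2.2.trans h⟩) (finite_oddNormIn X c)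

lemma norm_pos_of_odd {z : ℤ[i]} (hz : Odd z.norm) : 0 < z.norm := by
  refine GaussianInt.norm_pos.2 ?_
  rintro rfl
  simp at hz

lemma oddNormIn_eq_empty {c : ℝ} (X : Set ℂ) (hc : c < 1) : oddNormIn X c = ∅ := by
  refine eq_empty_of_forall_notMem fun z hz ↦ hc.not_ge (le_trans ?_ hz.2.2)
  exact_mod_cast norm_pos_of_odd hz.2.1

lemma tendsto_ncard_oddNormIn_div {X : Set ℂ}
    (hcone : ∀ ⦃x : ℂ⦄ ⦃r : ℝ⦄, x ∈ X → 0 < r → r • x ∈ X) (hX : MeasurableSet X)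
    (hfrontier : volume (frontier X) = 0) :
    Tendsto (fun c : ℝ ↦ ((oddNormIn X c).ncard : ℝ) / c) atTop
      (𝓝 (volume.real (X ∩ Metric.closedBall 0 1) / 2)) := by
  have hcard (c : ℝ) : ((oddNormIn X c).ncard : ℝ) =
      {z : ℤ[i] | 1 ∣ z ∧ (z : ℂ) ∈ X ∧ (z.norm : ℝ) ≤ c}.ncard -
        {z : ℤ[i] | ⟨1, 1⟩ ∣ z ∧ (z : ℂ) ∈ X ∧ (z.norm : ℝ) ≤ c}.ncard := by
    rw [eq_sub_iff_add_eq, ← Nat.cast_add, ← ncard_union_eq ?_ (finite_oddNormIn X c)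
      ((finite_setOf_norm_le c).subset fun _ hz ↦ hz.2.2)]
    · congr 2
      ext z
      simp only [oddNormIn, ← even_norm_iff, ← Int.not_even_iff_odd, mem_union, mem_ofPred_eq,
        one_dvd]
      tauto
    · exact disjoint_left.2 fun z hz hz' ↦ Int.not_even_iff_odd.2 hz.2.1 (even_norm_iff.2 hz'.1)
  have hall := tendsto_ncard_gaussianInt_dvd_div one_ne_zero hcone hX hfrontier
  have heven := tendsto_ncard_gaussianInt_dvd_div (w := ⟨1, 1⟩) (by decide) hcone hX hfrontier
  convert hall.sub heven using 2
  · rw [hcard, sub_div]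
  · norm_num [Zsqrtd.norm_def]
    ring

lemma ncard_setOf_dvd_gcd_oddNormIn {X : Set ℂ}
    (hcone : ∀ ⦃x : ℂ⦄ ⦃r : ℝ⦄, x ∈ X → 0 < r → r • x ∈ X) (c : ℝ) {d : ℕ} (hd : Odd d) :
    {z ∈ oddNormIn X c | d ∣ z.re.gcd z.im}.ncard = (oddNormIn X (c / d ^ 2)).ncard := by
  have hd₀ : 0 < d := hd.pos
  have hmem (x : ℂ) : d * x ∈ X ↔ x ∈ X := by
    refine ⟨fun h ↦ ?_, fun h ↦ by simpa using hcone h (Nat.cast_pos.2 hd₀)⟩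
    simpa [hd₀.ne'] using hcone h (inv_pos.2 (Nat.cast_pos.2 hd₀))
  have hinj : Function.Injective fun z : ℤ[i] ↦ (d : ℤ[i]) * z :=
    mul_right_injective₀ (by exact_mod_cast hd₀.ne')
  rw [← ncard_image_of_injective (oddNormIn X (c / d ^ 2)) hinj]
  congr 1
  ext z
  have hnorm (u : ℤ[i]) : ((d * u : ℤ[i]).norm : ℝ) ≤ c ↔ (u.norm : ℝ) ≤ c / d ^ 2 := by
    rw [le_div_iff₀ (by positivity), Zsqrtd.norm_mul, Zsqrtd.norm_natCast]
    push_cast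
    rw [mul_comm, sq]
  have hodd (u : ℤ[i]) : Odd (d * u : ℤ[i]).norm ↔ Odd u.norm := by
    simp [Zsqrtd.norm_mul, Zsqrtd.norm_natCast, Int.odd_mul, hd]
  have hdvd : d ∣ z.re.gcd z.im ↔ ∃ u : ℤ[i], d * u = z := by
    rw [← Int.natCast_dvd_natCast, Int.dvd_coe_gcd_iff, ← Zsqrtd.intCast_dvd, Int.cast_natCast]
    exact exists_congr fun u ↦ eq_comm
  simp only [mem_sep_iff, hdvd, mem_image]
  constructor
  · rintro ⟨hz, u, rfl⟩
    exact ⟨u, ⟨(hmem u).1 (by simpa using hz.1), (hodd u).1 hz.2.1, (hnorm u).1 hz.2.2⟩, rfl⟩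
  · rintro ⟨u, hu, rfl⟩
    exact ⟨⟨by simpa using (hmem u).2 hu.1, (hodd u).2 hu.2.1, (hnorm u).2 hu.2.2⟩, u, rfl⟩

lemma odd_gcd_of_odd_norm {z : ℤ[i]} (hz : Odd z.norm) : Odd (z.re.gcd z.im) := by
  have hdvd : (z.re.gcd z.im : ℤ) ∣ z.norm := by
    rw [norm_eq_sq_add_sq]
    exact dvd_add (dvd_pow (Int.gcd_dvd_left ..) two_ne_zero)
      (dvd_pow (Int.gcd_dvd_right ..) two_ne_zero)
  exact (Int.natAbs_odd.2 hz).of_dvd_nat (Int.natCast_dvd.1 hdvd)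

/-- The primitive Gaussian integers (those with coprime coordinates) of odd norm at most `c` that
lie in `X`. -/
def primitiveOddNormIn (X : Set ℂ) (c : ℝ) : Set ℤ[i] :=
  {z ∈ oddNormIn X c | z.re.gcd z.im = 1}

lemma ncard_primitiveOddNormIn_eq_tsum {X : Set ℂ}
    (hcone : ∀ ⦃x : ℂ⦄ ⦃r : ℝ⦄, x ∈ X → 0 < r → r • x ∈ X) (c : ℝ) :
    ((primitiveOddNormIn X c).ncard : ℝ) =
      ∑' d : {d : ℕ // Odd d}, (μ d : ℝ) * (oddNormIn X (c / (d : ℕ) ^ 2)).ncard := by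
  rw [primitiveOddNormIn, ncard_sep_eq_one_eq_tsum_moebius (finite_oddNormIn X c)
    fun z hz ↦ odd_gcd_of_odd_norm hz.2.1]
  simp only [ncard_setOf_dvd_gcd_oddNormIn hcone c (Subtype.prop _)]

lemma tendsto_ncard_primitiveOddNormIn_div {X : Set ℂ}
    (hcone : ∀ ⦃x : ℂ⦄ ⦃r : ℝ⦄, x ∈ X → 0 < r → r • x ∈ X) (hX : MeasurableSet X)
    (hfrontier : volume (frontier X) = 0) :
    Tendsto (fun c : ℝ ↦ ((primitiveOddNormIn X c).ncard : ℝ) / c) atTop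
      (𝓝 (4 * volume.real (X ∩ Metric.closedBall 0 1) / π ^ 2)) := by
  have hlim := tendsto_ncard_oddNormIn_div hcone hX hfrontier
  obtain ⟨C, hC⟩ := exists_abs_le_mul_abs_of_tendsto_div (monotone_ncard_oddNormIn X)
    (fun c hc ↦ by rw [oddNormIn_eq_empty X hc, ncard_empty, Nat.cast_zero]) hlim
  have hsum := tendsto_tsum_mul_comp_div_div hC hlim
    (fun d : {d : ℕ // Odd d} ↦ pow_pos (Nat.cast_pos.2 d.2.pos) 2) summable_odd_moebius_div_sq
  simp only [← ncard_primitiveOddNormIn_eq_tsum hcone, tsum_odd_moebius_div_sq] at hsum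
  convert hsum using 2
  ring

lemma exists_int_eq_natCast_mul_iff {h : ℕ} {p : ℚ} : (∃ a : ℤ, (h : ℚ) * p = a) ↔ p.den ∣ h := by
  constructor
  · rintro ⟨a, ha⟩
    rcases h.eq_zero_or_pos with rfl | hh
    · exact dvd_zero _
    have hp : p = Rat.divInt a h := by
      rw [Rat.divInt_eq_div, Int.cast_natCast, eq_div_iff (by positivity), ← ha, mul_comm]
    rw [← Int.natCast_dvd_natCast, hp]
    exact Rat.den_dvd a h
  · rintro ⟨k, rfl⟩
    refine ⟨k * p.num, ?_⟩
    push_cast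
    rw [mul_right_comm, Rat.den_mul_eq_num, mul_comm]

lemma height_eq_lcm (p q : ℚ) : height p q = p.den.lcm q.den := by
  have hset : IsLeast {h : ℕ | 0 < h ∧ (∃ a : ℤ, (h : ℚ) * p = a) ∧ ∃ b : ℤ, (h : ℚ) * q = b}
      (p.den.lcm q.den) := by
    simp only [exists_int_eq_natCast_mul_iff]
    exact ⟨⟨Nat.lcm_pos p.pos q.pos, Nat.dvd_lcm_left _ _, Nat.dvd_lcm_right _ _⟩,
      fun h ⟨hpos, hp, hq⟩ ↦ Nat.le_of_dvd hpos (Nat.lcm_dvd hp hq)⟩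
  exact hset.csInf_eq

lemma den_eq_den_of_sq_add_sq_eq_one {p q : ℚ} (h : p ^ 2 + q ^ 2 = 1) : q.den = p.den := by
  have hsq : q.den ^ 2 = p.den ^ 2 := by
    rw [← Rat.den_pow, ← Rat.den_pow, eq_sub_of_add_eq' h]
    exact Rat.intCast_sub_den 1 (p ^ 2)
  exact Nat.pow_left_injective two_ne_zero hsq

lemma height_of_sq_add_sq_eq_one {p q : ℚ} (h : p ^ 2 + q ^ 2 = 1) : height p q = p.den := by
  rw [height_eq_lcm, den_eq_den_of_sq_add_sq_eq_one h, Nat.lcm_self]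

/-- The rational point `z ^ 2 / N(z)` of the unit circle attached to a nonzero Gaussian integer `z`.
At `z = 0` it is the junk value `(0, 0)`. -/
def circlePoint (z : ℤ[i]) : ℚ × ℚ :=
  ((z ^ 2).re / z.norm, (z ^ 2).im / z.norm)

lemma re_sq (z : ℤ[i]) : (z ^ 2).re = z.re ^ 2 - z.im ^ 2 := by
  rw [sq, Zsqrtd.re_mul]
  ring

lemma im_sq (z : ℤ[i]) : (z ^ 2).im = 2 * z.re * z.im := by
  rw [sq, Zsqrtd.im_mul]
  ring

lemma circlePoint_neg (z : ℤ[i]) : circlePoint (-z) = circlePoint z := by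
  rw [circlePoint, circlePoint, neg_sq, Zsqrtd.norm_neg]

lemma circlePoint_sq_add_sq {z : ℤ[i]} (hz : z ≠ 0) :
    (circlePoint z).1 ^ 2 + (circlePoint z).2 ^ 2 = 1 := by
  have hnorm : (z.norm : ℚ) ≠ 0 := by exact_mod_cast (GaussianInt.norm_pos.2 hz).ne'
  rw [circlePoint, div_pow, div_pow, ← add_div, div_eq_one_iff_eq (pow_ne_zero 2 hnorm), re_sq,
    im_sq, norm_eq_sq_add_sq]
  push_cast
  ring

lemma isCoprime_re_sq_norm {z : ℤ[i]} (hodd : Odd z.norm) (hgcd : z.re.gcd z.im = 1) :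
    IsCoprime (z ^ 2).re z.norm := by
  have hre : IsCoprime (z.re ^ 2) z.norm := by
    rw [norm_eq_sq_add_sq]
    have hsq := (Int.isCoprime_iff_gcd_eq_one.2 hgcd).pow (m := 2) (n := 2)
    simpa [add_comm] using hsq.add_mul_left_right 1
  have htwo : IsCoprime 2 z.norm := Int.isCoprime_two_left.2 hodd
  have hsub : (z ^ 2).re = 2 * z.re ^ 2 + z.norm * (-1) := by
    rw [re_sq, norm_eq_sq_add_sq]
    ring
  rw [hsub]
  exact (htwo.mul_left hre).add_mul_left_left (-1)

lemma num_circlePoint_fst {z : ℤ[i]} (hodd : Odd z.norm) (hgcd : z.re.gcd z.im = 1) :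
    (circlePoint z).1.num = (z ^ 2).re :=
  Rat.num_div_eq_of_coprime (norm_pos_of_odd hodd)
    (Int.isCoprime_iff_gcd_eq_one.1 (isCoprime_re_sq_norm hodd hgcd))

lemma den_circlePoint_fst {z : ℤ[i]} (hodd : Odd z.norm) (hgcd : z.re.gcd z.im = 1) :
    ((circlePoint z).1.den : ℤ) = z.norm :=
  Rat.den_div_eq_of_coprime (norm_pos_of_odd hodd)
    (Int.isCoprime_iff_gcd_eq_one.1 (isCoprime_re_sq_norm hodd hgcd))

lemma height_circlePoint {z : ℤ[i]} (hodd : Odd z.norm) (hgcd : z.re.gcd z.im = 1) :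
    (height (circlePoint z).1 (circlePoint z).2 : ℤ) = z.norm := by
  rw [height_of_sq_add_sq_eq_one (circlePoint_sq_add_sq (GaussianInt.norm_pos.1
    (norm_pos_of_odd hodd))), den_circlePoint_fst hodd hgcd]

lemma odd_num_circlePoint_fst {z : ℤ[i]} (hodd : Odd z.norm) (hgcd : z.re.gcd z.im = 1) :
    Odd (circlePoint z).1.num := by
  rw [num_circlePoint_fst hodd hgcd, re_sq]
  rw [norm_eq_sq_add_sq] at hodd
  simpa [parity_simps] using hodd

lemma circlePoint_eq_cos_sin {z : ℤ[i]} (hz : z ≠ 0) :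
    ((circlePoint z).1 : ℝ) = Real.cos (2 * (z : ℂ).arg) ∧
      ((circlePoint z).2 : ℝ) = Real.sin (2 * (z : ℂ).arg) := by
  have hz' : (z : ℂ) ≠ 0 := GaussianInt.toComplex_eq_zero.not.2 hz
  rw [Real.cos_two_mul', Real.sin_two_mul, Complex.cos_arg hz', Complex.sin_arg]
  simp only [circlePoint, re_sq, im_sq, Rat.cast_div, Rat.cast_intCast,
    GaussianInt.intCast_real_norm, Complex.normSq_eq_norm_sq, Int.cast_sub, Int.cast_mul,
    Int.cast_pow, Int.cast_ofNat, Rat.cast_sub, Rat.cast_mul, Rat.cast_pow, Rat.cast_ofNat,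
    GaussianInt.intCast_re, GaussianInt.intCast_im]
  constructor <;> ring

lemma injOn_cos_sin : InjOn (fun t ↦ (Real.cos t, Real.sin t)) (Ico 0 (2 * π)) := by
  intro s hs t ht hst
  have hangle : (s : Real.Angle) = t :=
    Real.Angle.cos_sin_inj (congrArg Prod.fst hst) (congrArg Prod.snd hst)
  rw [← zero_add (2 * π)] at hs ht
  have : Fact (0 < 2 * π) := ⟨Real.two_pi_pos⟩
  exact (AddCircle.coe_eq_coe_iff_of_mem_Ico hs ht).1 hangle

lemma arg_mem_Ico_or_arg_neg_mem_Ico (z : ℂ) : z.arg ∈ Ico 0 π ∨ (-z).arg ∈ Ico 0 π := by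
  have hmem (w : ℂ) : w.arg ∈ Ico 0 π ↔ 0 ≤ w.im ∧ ¬ (w.re < 0 ∧ w.im = 0) := by
    rw [mem_Ico, Complex.arg_nonneg_iff, (Complex.arg_le_pi w).lt_iff_ne, Ne,
      Complex.arg_eq_pi_iff]
  rw [hmem, hmem, Complex.neg_re, Complex.neg_im]
  grind

lemma num_sq_add_num_sq {p q : ℚ} (h : p ^ 2 + q ^ 2 = 1) :
    p.num ^ 2 + q.num ^ 2 = (p.den : ℤ) ^ 2 := by
  have hp := Rat.mul_den_eq_num p
  have hq := Rat.mul_den_eq_num q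
  rw [den_eq_den_of_sq_add_sq_eq_one h] at hq
  have hcast : (p.num : ℚ) ^ 2 + q.num ^ 2 = p.den ^ 2 := by
    rw [← hp, ← hq]
    linear_combination (p.den : ℚ) ^ 2 * h
  exact_mod_cast hcast

lemma gcd_num_num {p q : ℚ} (h : p ^ 2 + q ^ 2 = 1) : p.num.gcd q.num = 1 := by
  have hcoprime : IsCoprime p.num (p.den : ℤ) := Int.isCoprime_iff_gcd_eq_one.2 p.reduced
  have hsq : IsCoprime (p.num ^ 2) (q.num ^ 2) := by
    rw [eq_sub_of_add_eq' (num_sq_add_num_sq h)]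
    simpa [sub_eq_add_neg] using (hcoprime.pow (m := 2) (n := 2)).add_mul_left_right (-1)
  exact Int.isCoprime_iff_gcd_eq_one.1 ((IsCoprime.pow_iff two_pos two_pos).1 hsq)

lemma exists_circlePoint_eq {p q : ℚ} (hpq : p ^ 2 + q ^ 2 = 1) (hp : Odd p.num) :
    ∃ z : ℤ[i], Odd z.norm ∧ z.re.gcd z.im = 1 ∧ circlePoint z = (p, q) := by
  have htriple : PythagoreanTriple p.num q.num p.den := by
    simpa only [PythagoreanTriple, sq] using num_sq_add_num_sq hpq
  obtain ⟨m, n, hre, him, hnorm, hgcd, -⟩ := htriple.coprime_classification'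
    (gcd_num_num hpq) (Int.odd_iff.1 hp) (Int.natCast_pos.2 p.pos)
  refine ⟨⟨m, n⟩, ?_, hgcd, ?_⟩
  · rw [norm_eq_sq_add_sq]
    rw [hre] at hp
    simpa [parity_simps] using hp
  · rw [circlePoint, re_sq, im_sq, norm_eq_sq_add_sq, ← hre, ← him, ← hnorm, Int.cast_natCast,
      Rat.num_div_den, ← den_eq_den_of_sq_add_sq_eq_one hpq, Rat.num_div_den]

lemma exists_circlePoint_eq_of_arg_mem {p q : ℚ} (hpq : p ^ 2 + q ^ 2 = 1) (hp : Odd p.num) :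
    ∃ z : ℤ[i], Odd z.norm ∧ z.re.gcd z.im = 1 ∧ (z : ℂ).arg ∈ Ico 0 π ∧
      circlePoint z = (p, q) := by
  obtain ⟨z, hodd, hgcd, hz⟩ := exists_circlePoint_eq hpq hp
  rcases arg_mem_Ico_or_arg_neg_mem_Ico z with harg | harg
  · exact ⟨z, hodd, hgcd, harg, hz⟩
  · exact ⟨-z, by rwa [Zsqrtd.norm_neg], by simpa using hgcd, by simpa using harg, by
      rw [circlePoint_neg, hz]⟩

lemma two_mul_mem_Ico {x : ℝ} (hx : x ∈ Ico 0 π) : 2 * x ∈ Ico 0 (2 * π) :=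
  ⟨by linarith [hx.1], by linarith [hx.2]⟩

lemma eq_two_mul_arg {z : ℤ[i]} (hz : z ≠ 0) (harg : (z : ℂ).arg ∈ Ico 0 π) {t : ℝ}
    (ht : t ∈ Ico 0 (2 * π)) (hcos : ((circlePoint z).1 : ℝ) = Real.cos t)
    (hsin : ((circlePoint z).2 : ℝ) = Real.sin t) : t = 2 * (z : ℂ).arg := by
  obtain ⟨hcos', hsin'⟩ := circlePoint_eq_cos_sin hz
  exact injOn_cos_sin ht (two_mul_mem_Ico harg)
    (Prod.ext (hcos.symm.trans hcos') (hsin.symm.trans hsin'))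

lemma injOn_circlePoint : InjOn circlePoint
    {z | Odd z.norm ∧ z.re.gcd z.im = 1 ∧ (z : ℂ).arg ∈ Ico 0 π} := by
  intro z ⟨hz, hzgcd, hzarg⟩ w ⟨hw, hwgcd, hwarg⟩ hzw
  have hnorm : z.norm = w.norm := by
    rw [← den_circlePoint_fst hz hzgcd, hzw, den_circlePoint_fst hw hwgcd]
  obtain ⟨hcos, hsin⟩ := circlePoint_eq_cos_sin (GaussianInt.norm_pos.1 (norm_pos_of_odd hw))
  have harg := eq_two_mul_arg (GaussianInt.norm_pos.1 (norm_pos_of_odd hz)) hzarg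
    (two_mul_mem_Ico hwarg) (hzw ▸ hcos) (hzw ▸ hsin)
  refine GaussianInt.toComplex_injective (Complex.ext_norm_arg ?_ (by linarith))
  rw [← sq_eq_sq₀ (norm_nonneg _) (norm_nonneg _), ← Complex.normSq_eq_norm_sq,
    ← Complex.normSq_eq_norm_sq, ← GaussianInt.intCast_real_norm, ← GaussianInt.intCast_real_norm,
    hnorm]

lemma image_circlePoint_primitiveOddNormIn {Θ : Set ℝ} (hΘ : Θ ⊆ Ico 0 (2 * π)) (H : ℕ) :
    circlePoint '' primitiveOddNormIn (Complex.arg ⁻¹' ((2 * ·) ⁻¹' Θ)) H =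
      {pq : ℚ × ℚ | pq.1 ^ 2 + pq.2 ^ 2 = 1 ∧ Odd pq.1.num ∧
        (∃ t ∈ Θ, (pq.1 : ℝ) = Real.cos t ∧ (pq.2 : ℝ) = Real.sin t) ∧ height pq.1 pq.2 ≤ H} := by
  have hle {z : ℤ[i]} (hodd : Odd z.norm) (hgcd : z.re.gcd z.im = 1) :
      height (circlePoint z).1 (circlePoint z).2 ≤ H ↔ (z.norm : ℝ) ≤ H := by
    rw [← height_circlePoint hodd hgcd]
    norm_cast
  ext ⟨p, q⟩
  constructor
  · rintro ⟨z, ⟨⟨harg, hodd, hnorm⟩, hgcd⟩, hz⟩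
    have hz₀ : z ≠ 0 := GaussianInt.norm_pos.1 (norm_pos_of_odd hodd)
    rw [← hz]
    exact ⟨circlePoint_sq_add_sq hz₀, odd_num_circlePoint_fst hodd hgcd,
      ⟨_, harg, circlePoint_eq_cos_sin hz₀⟩, (hle hodd hgcd).2 hnorm⟩
  · rintro ⟨hpq, hp, ⟨t, ht, hcos, hsin⟩, hH⟩
    obtain ⟨z, hodd, hgcd, harg, hz⟩ := exists_circlePoint_eq_of_arg_mem hpq hp
    obtain rfl : t = 2 * (z : ℂ).arg :=
      eq_two_mul_arg (GaussianInt.norm_pos.1 (norm_pos_of_odd hodd)) harg (hΘ ht)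
        (by rwa [hz]) (by rwa [hz])
    exact ⟨z, ⟨⟨ht, hodd, (hle hodd hgcd).1 (by rwa [hz])⟩, hgcd⟩, hz⟩

lemma smul_mem_preimage_arg {s : Set ℝ} ⦃x : ℂ⦄ ⦃r : ℝ⦄ (hx : x ∈ Complex.arg ⁻¹' s) (hr : 0 < r) :
    r • x ∈ Complex.arg ⁻¹' s := by
  rwa [mem_preimage, Complex.real_smul, Complex.arg_real_mul x hr]

lemma tendsto_ncard_image_circlePoint_div {Θ : Set ℝ} (hΘ : Θ ⊆ Ico 0 (2 * π))
    (hmeas : MeasurableSet Θ) (hfrontier : volume (frontier Θ) = 0) :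
    Tendsto (fun H : ℕ ↦ ((circlePoint ''
        primitiveOddNormIn (Complex.arg ⁻¹' ((2 * ·) ⁻¹' Θ)) H).ncard : ℝ) / H) atTop
      (𝓝 (volume.real Θ / π ^ 2)) := by
  have hhalf : (2 * ·) ⁻¹' Θ ⊆ Ico 0 π := fun x hx ↦
    ⟨by linarith [(hΘ hx).1], by linarith [(hΘ hx).2]⟩
  have hvolume : volume.real ((2 * ·) ⁻¹' Θ) = volume.real Θ / 2 := by
    rw [measureReal_def, Real.volume_preimage_mul_left two_ne_zero, ENNReal.toReal_mul,
      ENNReal.toReal_ofReal (abs_nonneg _), abs_of_pos (by norm_num), measureReal_def]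
    ring
  have hfrontier' : volume (frontier ((2 * ·) ⁻¹' Θ)) = 0 := by
    rw [← Homeomorph.coe_mulLeft₀ 2 two_ne_zero, ← Homeomorph.preimage_frontier,
      Homeomorph.coe_mulLeft₀, Real.volume_preimage_mul_left two_ne_zero, hfrontier, mul_zero]
  have hmeas' : MeasurableSet ((2 * ·) ⁻¹' Θ) := hmeas.preimage (measurable_const_mul 2)
  have hinj (c : ℝ) :
      InjOn circlePoint (primitiveOddNormIn (Complex.arg ⁻¹' ((2 * ·) ⁻¹' Θ)) c) :=
    injOn_circlePoint.mono fun z ⟨⟨hz, hodd, _⟩, hgcd⟩ ↦ And.intro hodd ⟨hgcd, hhalf hz⟩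
  have hlim := tendsto_ncard_primitiveOddNormIn_div smul_mem_preimage_arg
    (Complex.measurable_arg hmeas') (volume_frontier_preimage_arg_eq_zero hfrontier')
  have hinter : (2 * ·) ⁻¹' Θ ∩ Ioo (-π) π = (2 * ·) ⁻¹' Θ :=
    inter_eq_left.2 (hhalf.trans (Ico_subset_Ioo_left (neg_lt_zero.2 Real.pi_pos)))
  rw [volume_real_preimage_arg_inter_closedBall hmeas', hinter, hvolume] at hlim
  convert hlim.comp tendsto_natCast_atTop_atTop using 2 with H
  · rw [Function.comp_apply, (hinj H).ncard_image]
  · ring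

lemma tendsto_ncard_sdiff_div {α ι : Type*} {l : Filter ι} {s : ι → Set α} {t : Set α} {a : ι → ℝ}
    {L : ℝ} (ht : t.Finite) (ha : Tendsto a l atTop)
    (h : Tendsto (fun i ↦ ((s i).ncard : ℝ) / a i) l (𝓝 L)) :
    Tendsto (fun i ↦ ((s i \ t).ncard : ℝ) / a i) l (𝓝 L) := by
  have hle (i : ι) : (s i \ t).ncard ≤ (s i).ncard := by
    rcases (s i).finite_or_infinite with hs | hs
    · exact ncard_le_ncard sdiff_subset hs
    · rw [(hs.sdiff ht).ncard]
      exact Nat.zero_le _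
  have hlower : Tendsto (fun i ↦ ((s i).ncard : ℝ) / a i - t.ncard / a i) l (𝓝 L) := by
    simpa using h.sub (ha.const_div_atTop (t.ncard : ℝ))
  refine tendsto_of_tendsto_of_tendsto_of_le_of_le' hlower h ?_ ?_ <;>
    filter_upwards [ha.eventually_gt_atTop 0] with i hi
  · rw [← sub_div]
    gcongr
    rw [sub_le_iff_le_add]
    exact_mod_cast ncard_le_ncard_sdiff_add_ncard (s i) t ht
  · exact div_le_div_of_nonneg_right (Nat.cast_le.2 (hle i)) hi.le

lemma eq_zero_iff_of_sq_add_sq_eq_one {p q : ℚ} (h : p ^ 2 + q ^ 2 = 1) :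
    q = 0 ↔ (p, q) ∈ ({(1, 0), (-1, 0)} : Set (ℚ × ℚ)) := by
  constructor
  · rintro rfl
    simpa using h
  · rintro (h | h) <;> exact congrArg Prod.snd h

lemma setOf_ne_zero_and_odd_num_eq_sdiff (Θ : Set ℝ) (H : ℕ) :
    {pq : ℚ × ℚ | pq.1 ^ 2 + pq.2 ^ 2 = 1 ∧ pq.1 ≠ 0 ∧ pq.2 ≠ 0 ∧ Odd (|pq.1|).num ∧
        (∃ t ∈ Θ, (pq.1 : ℝ) = Real.cos t ∧ (pq.2 : ℝ) = Real.sin t) ∧ height pq.1 pq.2 ≤ H} =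
      {pq : ℚ × ℚ | pq.1 ^ 2 + pq.2 ^ 2 = 1 ∧ Odd pq.1.num ∧
        (∃ t ∈ Θ, (pq.1 : ℝ) = Real.cos t ∧ (pq.2 : ℝ) = Real.sin t) ∧ height pq.1 pq.2 ≤ H} \
        {(1, 0), (-1, 0)} := by
  ext ⟨p, q⟩
  have hodd : Odd |p|.num ↔ Odd p.num := by rw [Rat.num_abs_eq_abs_num, odd_abs]
  have hp : Odd p.num → p ≠ 0 := by
    rintro h rfl
    simp at h
  simp only [Set.mem_sdiff, mem_ofPred_eq, hodd]
  have hq := eq_zero_iff_of_sq_add_sq_eq_one (p := p) (q := q)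
  tauto

theorem rational_points_odd_sector_count_general {Θ : Set ℝ} (hΘ : Θ ⊆ Ico 0 (2 * π))
    (hmeas : MeasurableSet Θ) (hfrontier : volume (frontier Θ) = 0) :
    Tendsto (fun H : ℕ ↦
      ({pq : ℚ × ℚ | pq.1 ^ 2 + pq.2 ^ 2 = 1 ∧ pq.1 ≠ 0 ∧ pq.2 ≠ 0 ∧ Odd (|pq.1|).num ∧
        (∃ t ∈ Θ, (pq.1 : ℝ) = Real.cos t ∧ (pq.2 : ℝ) = Real.sin t) ∧
        height pq.1 pq.2 ≤ H}.ncard : ℝ) / H) atTop (𝓝 (volume.real Θ / π ^ 2)) := by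
  simp only [setOf_ne_zero_and_odd_num_eq_sdiff, ← image_circlePoint_primitiveOddNormIn hΘ]
  exact tendsto_ncard_sdiff_div (toFinite _) tendsto_natCast_atTop_atTop
    (tendsto_ncard_image_circlePoint_div hΘ hmeas hfrontier)

end

/-- **Counting rational points in `S¹_ℚ(odd)` by angle.**  Let `S¹_ℚ(odd)` be the set of
rational points `(p,q)` on the unit circle with `p ≠ 0`, `q ≠ 0` such that the numerator
of `|p|` in lowest terms is odd.  For `0 ≤ θ₁ < θ₂ ≤ 2π`, the number of points of
`S¹_ℚ(odd)` with angle `θ(p,q) ∈ [θ₁, θ₂)` and height at most `H` is asymptotic to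
`(θ₂−θ₁)/π² · H`. -/
theorem rational_points_odd_sector_count (θ₁ θ₂ : ℝ)
    (h0 : 0 ≤ θ₁) (h₁₂ : θ₁ < θ₂) (h₂ : θ₂ ≤ 2 * Real.pi) :
    Tendsto
      (fun H : ℕ =>
        (1 : ℝ) / H *
          ({pq : ℚ × ℚ | pq.1 ^ 2 + pq.2 ^ 2 = 1 ∧ pq.1 ≠ 0 ∧ pq.2 ≠ 0 ∧
              Odd (|pq.1|).num ∧
              (∃ t : ℝ, θ₁ ≤ t ∧ t < θ₂ ∧
                (pq.1 : ℝ) = Real.cos t ∧ (pq.2 : ℝ) = Real.sin t) ∧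
              height pq.1 pq.2 ≤ H}.ncard : ℝ))
      atTop (nhds ((θ₂ - θ₁) / Real.pi ^ 2)) := by
  have hΘ : Set.Ico θ₁ θ₂ ⊆ Set.Ico 0 (2 * Real.pi) := Set.Ico_subset_Ico h0 h₂
  have hfrontier : MeasureTheory.volume (frontier (Set.Ico θ₁ θ₂)) = 0 := by
    rw [frontier_Ico h₁₂]
    exact (Set.toFinite _).measure_zero _
  simpa only [one_div_mul_eq_div, Set.mem_Ico, and_assoc, Real.volume_real_Ico_of_le h₁₂.le] using
    rational_points_odd_sector_count_general hΘ measurableSet_Ico hfrontier
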